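/- Two PGA-programs X and Y denote the same SPI (are single-pass congruent) if and only if the equation X = Y is derivable in equational logic from the axioms PGA1 ((X;Y);Z = X;(Y;Z)), PGA2 ((X^n)^ω = X^ω for n ≥ 1), PGA3 (X^ω;Y = X^ω) and PGA4 ((X;Y)^ω = X;(Y;X)^ω). -/

import Mathlib

/-- Primitive instructions over a set `A` of basic instructions:
basic instructions `a`, positive tests `+a`, negative tests `-a`,
jump instructions `#k` and the termination instruction `!`. -/
inductive PrimInstr (A : Type) : Type where
  | basic (a : A)
  | pos (a : A)
  | neg (a : A)
  | jump (k : Nat)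
  | halt
deriving DecidableEq

/-- PGA-programs over `A`: primitive instructions, concatenation `X;Y`
and repetition `X^ω`. -/
inductive PGA (A : Type) : Type where
  | prim (u : PrimInstr A)
  | seq (X Y : PGA A)
  | rep (X : PGA A)
deriving DecidableEq

/-- `X.pow n` is the power `X^n` for `n ≥ 1`: `X^1 = X` and `X^(n+1) = X ; X^n`.
(The value at `0` is irrelevant and set to `X`; all statements only use `n ≥ 1`.) -/
def PGA.pow {A : Type} (X : PGA A) : Nat → PGA A
  | 0 => X
  | 1 => X
  | n+2 => X.seq (X.pow (n+1))

/-- A SPI: a nonempty finite (list) or infinite (function) sequence of primitive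
instructions.  (Nonemptiness always holds for denotations of PGA-programs.) -/
abbrev SPI (A : Type) : Type := List (PrimInstr A) ⊕ (ℕ → PrimInstr A)

/-- Concatenation of SPIs; if the first one is infinite, it is the result. -/
def SPI.seqc {A : Type} : SPI A → SPI A → SPI A
  | .inl l, .inl l' => .inl (l ++ l')
  | .inl l, .inr s => .inr fun n => if h : n < l.length then l.get ⟨n, h⟩ else s (n - l.length)
  | .inr s, _ => .inr s

/-- Infinite repetition of a SPI; an infinite SPI is its own repetition.
(The `getD`-default is never relevant: SPIs of PGA-programs are nonempty.) -/
def SPI.omega {A : Type} : SPI A → SPI A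
  | .inl l => .inr fun n => l.getD (n % l.length) .halt
  | .inr s => .inr s

/-- The SPI denoted by a PGA-program. -/
def PGA.spi {A : Type} : PGA A → SPI A
  | .prim u => .inl [u]
  | .seq X Y => X.spi.seqc Y.spi
  | .rep X => X.spi.omega

/-- Equational-logic derivability from the axioms PGA1-PGA4 of program algebra. -/
inductive DerivPGA {A : Type} : PGA A → PGA A → Prop
  | refl (X : PGA A) : DerivPGA X X
  | symm {X Y : PGA A} : DerivPGA X Y → DerivPGA Y X
  | trans {X Y Z : PGA A} : DerivPGA X Y → DerivPGA Y Z → DerivPGA X Z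
  | seq_congr {X X' Y Y' : PGA A} : DerivPGA X X' → DerivPGA Y Y' → DerivPGA (X.seq Y) (X'.seq Y')
  | rep_congr {X Y : PGA A} : DerivPGA X Y → DerivPGA X.rep Y.rep
  | pga1 (X Y Z : PGA A) : DerivPGA ((X.seq Y).seq Z) (X.seq (Y.seq Z))
  | pga2 (X : PGA A) (n : ℕ) (hn : 1 ≤ n) : DerivPGA ((X.pow n).rep) X.rep
  | pga3 (X Y : PGA A) : DerivPGA (X.rep.seq Y) X.rep
  | pga4 (X Y : PGA A) : DerivPGA ((X.seq Y).rep) (X.seq ((Y.seq X).rep))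

namespace PGAaux

variable {A : Type}

theorem spi_ne (X : PGA A) : ∀ l, X.spi = .inl l → l ≠ [] := by
  induction X with
  | prim u => intro l h; simp [PGA.spi] at h; subst h; simp
  | seq X Y ihX ihY =>
    intro l h
    rcases hX : X.spi with a | a <;> rcases hY : Y.spi with b | b <;>
      simp [PGA.spi, hX, hY, SPI.seqc] at h
    subst h
    have := ihX a hX
    simp [this]
  | rep X ih =>
    intro l h
    rcases hX : X.spi with a | a <;> simp [PGA.spi, hX, SPI.omega] at h

theorem omega_unique (l : List (PrimInstr A)) (hl : l ≠ []) (s : ℕ → PrimInstr A)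
    (h1 : ∀ i < l.length, s i = l.getD i .halt) (h2 : ∀ i, s (i + l.length) = s i) :
    SPI.omega (.inl l) = .inr s := by
  have hp : 0 < l.length := List.length_pos_iff.2 hl
  simp only [SPI.omega]
  congr 1
  funext i
  rw [← h1 _ (Nat.mod_lt _ hp)]
  have : ∀ k j, s (j + k * l.length) = s j := by
    intro k
    induction k with
    | zero => simp
    | succ k ih => intro j; rw [Nat.succ_mul, ← Nat.add_assoc, h2, ih]
  conv_rhs => rw [← Nat.mod_add_div i l.length, Nat.mul_comm, this]

theorem seqc_assoc (a b c : SPI A) : (a.seqc b).seqc c = a.seqc (b.seqc c) := by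
  rcases a with a | a <;> rcases b with b | b <;> rcases c with c | c <;> simp [SPI.seqc]
  funext n
  by_cases h1 : n < a.length
  · simp [h1, List.getElem_append, Nat.lt_add_right]
  · by_cases h2 : n < a.length + b.length
    · have : n - a.length < b.length := by omega
      simp [h1, h2, this, List.getElem_append]
    · have : ¬ n - a.length < b.length := by omega
      simp [h1, h2, this, Nat.sub_sub]

theorem flat_getD (l : List (PrimInstr A)) (n : ℕ) : ∀ j < n * l.length,
    l.getD (j % l.length) .halt = (List.replicate n l).flatten.getD j .halt := by
  induction n with
  | zero => simp
  | succ n ih =>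
    intro j hj
    rw [List.replicate_succ, List.flatten_cons]
    by_cases h : j < l.length
    · rw [List.getD_append _ _ _ _ h, Nat.mod_eq_of_lt h]
    · rw [List.getD_append_right _ _ _ _ (by omega), ← ih]
      · congr 1
        exact Nat.mod_eq_sub_mod (by omega)
      · rw [Nat.succ_mul] at hj; omega

theorem pow_inl (X : PGA A) (l) (h : X.spi = .inl l) (n : ℕ) :
    (X.pow (n+1)).spi = .inl (List.replicate (n+1) l).flatten := by
  induction n with
  | zero => simp [PGA.pow, h]
  | succ n ih => 
    rw [PGA.pow, PGA.spi, ih, h]; simp [SPI.seqc, List.replicate_succ]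

theorem pow_inr (X : PGA A) (s) (h : X.spi = .inr s) (n : ℕ) :
    (X.pow (n+1)).spi = .inr s := by
  cases n with
  | zero => simp [PGA.pow, h]
  | succ n => rw [PGA.pow, PGA.spi, h]; simp [SPI.seqc]

theorem sound2 (X : PGA A) (n : ℕ) (hn : 1 ≤ n) : (X.pow n).rep.spi = X.rep.spi := by
  obtain ⟨n, rfl⟩ : ∃ k, n = k + 1 := ⟨n - 1, by omega⟩
  rcases h : X.spi with l | s
  · have hl := spi_ne X l h
    simp only [PGA.spi, pow_inl X l h, h]
    have e : SPI.omega (.inl l) = .inr fun i => l.getD (i % l.length) .halt := rfl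
    rw [e]
    apply omega_unique
    · simp [List.replicate_succ, hl]
    · intro i hi
      apply flat_getD
      simpa using hi
    · intro i
      simp
  · simp only [PGA.spi, pow_inr X s h, h]

theorem sound4 (X Y : PGA A) : (X.seq Y).rep.spi = (X.seq (Y.seq X).rep).spi := by
  rcases hX : X.spi with l | s
  · rcases hY : Y.spi with m | t
    · have hl := spi_ne X l hX
      have hp : 0 < l.length := List.length_pos_iff.2 hl
      simp only [PGA.spi, hX, hY, SPI.seqc]
      have e : SPI.omega (.inl (m ++ l)) =
        .inr fun i => (m ++ l).getD (i % (m ++ l).length) .halt := rfl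
      rw [e]
      simp only [SPI.seqc]
      apply omega_unique
      · simp [hl]
      · intro i hi
        rw [List.length_append] at hi
        by_cases h : i < l.length
        · rw [dif_pos h, List.getD_append _ _ _ _ h]; simp [h]
        · rw [dif_neg h, List.length_append, Nat.mod_eq_of_lt (by omega),
            List.getD_append m l _ _ (by omega), List.getD_append_right l m _ _ (by omega)]
      · intro i
        have h0 : ¬ i + (l ++ m).length < l.length := by simp; omega
        rw [dif_neg h0]
        by_cases h : i < l.length
        · rw [dif_pos h, List.length_append, List.length_append,
            Nat.mod_eq_of_lt (by omega), List.getD_append_right _ _ _ _ (by omega)]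
          have : i + (l.length + m.length) - l.length - m.length = i := by omega
          rw [this]; simp [h]
        · rw [dif_neg h]
          have : i + (l ++ m).length - l.length = (i - l.length) + (m ++ l).length := by
            simp; omega
          rw [this, Nat.add_mod_right]
    · simp [PGA.spi, hX, hY, SPI.seqc, SPI.omega]
  · simp [PGA.spi, hX, SPI.seqc, SPI.omega]

theorem sound {X Y : PGA A} (h : DerivPGA X Y) : X.spi = Y.spi := by
  induction h with
  | refl => rfl
  | symm _ ih => exact ih.symm
  | trans _ _ h1 h2 => exact h1.trans h2
  | seq_congr _ _ h1 h2 => simp only [PGA.spi, h1, h2]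
  | rep_congr _ h => simp only [PGA.spi, h]
  | pga1 X Y Z => exact seqc_assoc _ _ _
  | pga2 X n hn => exact sound2 X n hn
  | pga3 X Y => rcases h : X.spi with l | s <;> simp [PGA.spi, h, SPI.omega, SPI.seqc]
  | pga4 X Y => exact sound4 X Y

/-- The program of a nonempty list. -/
def F : List (PrimInstr A) → PGA A
  | [] => .prim .halt
  | [u] => .prim u
  | u :: v :: l => (PGA.prim u).seq (F (v :: l))

theorem F_spi (l : List (PrimInstr A)) (h : l ≠ []) : (F l).spi = .inl l := by
  induction l with
  | nil => simp at h
  | cons u l ih =>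
    cases l with
    | nil => rfl
    | cons v l => rw [F, PGA.spi, ih (by simp)]; rfl

theorem F_append (l m : List (PrimInstr A)) (h : l ≠ []) (hm : m ≠ []) :
    DerivPGA ((F l).seq (F m)) (F (l ++ m)) := by
  induction l with
  | nil => simp at h
  | cons u l ih =>
    cases l with
    | nil => cases m with
      | nil => simp at hm
      | cons v m => exact .refl _
    | cons v l => exact (DerivPGA.pga1 _ _ _).trans (.seq_congr (.refl _) (ih (by simp)))

theorem unfold_rep (X : PGA A) : DerivPGA X.rep (X.seq X.rep) := by
  have h2 : DerivPGA (X.seq X).rep X.rep := DerivPGA.pga2 X 2 (by omega)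
  exact (h2.symm.trans (.pga4 X X)).trans (.seq_congr (.refl _) h2)

theorem rep_rep (X : PGA A) : DerivPGA X.rep.rep X.rep := by
  exact (unfold_rep X.rep).trans (.pga3 _ _)

theorem normal (X : PGA A) : (∃ l, l ≠ [] ∧ DerivPGA X (F l)) ∨
    ∃ l m, l ≠ [] ∧ m ≠ [] ∧ DerivPGA X ((F l).seq (F m).rep) := by
  induction X with
  | prim u => exact .inl ⟨[u], by simp, .refl _⟩
  | seq X Y hX hY =>
    rcases hX with ⟨l, hl, hX⟩ | ⟨l, m, hl, hm, hX⟩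
    · rcases hY with ⟨l', hl', hY⟩ | ⟨l', m', hl', hm', hY⟩
      · exact .inl ⟨l ++ l', by simp [hl], (DerivPGA.seq_congr hX hY).trans (F_append _ _ hl hl')⟩
      · exact .inr ⟨l ++ l', m', by simp [hl], hm', (DerivPGA.seq_congr hX hY).trans
          ((DerivPGA.pga1 _ _ _).symm.trans (.seq_congr (F_append _ _ hl hl') (.refl _)))⟩
    · exact .inr ⟨l, m, hl, hm, (DerivPGA.seq_congr hX (.refl _)).trans
        ((DerivPGA.pga1 _ _ _).trans (.seq_congr (.refl _) (.pga3 _ _)))⟩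
  | rep X hX =>
    rcases hX with ⟨l, hl, hX⟩ | ⟨l, m, hl, hm, hX⟩
    · exact .inr ⟨l, l, hl, hl, (DerivPGA.rep_congr hX).trans (unfold_rep _)⟩
    · exact .inr ⟨l, m, hl, hm, (DerivPGA.rep_congr hX).trans ((DerivPGA.pga4 _ _).trans
        (.seq_congr (.refl _) ((DerivPGA.rep_congr (.pga3 _ _)).trans (rep_rep _))))⟩

theorem rot (l m : List (PrimInstr A)) (hl : l ≠ []) (hm : m ≠ []) :
    ∃ l' m', l'.length = l.length + 1 ∧ m'.length = m.length ∧
      DerivPGA ((F l).seq (F m).rep) ((F l').seq (F m').rep) := by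
  cases m with
  | nil => simp at hm
  | cons u m =>
    refine ⟨l ++ [u], m ++ [u], by simp, by simp, ?_⟩
    have key : DerivPGA (F (u :: m)).rep ((F [u]).seq (F (m ++ [u])).rep) := by
      cases m with
      | nil => exact unfold_rep _
      | cons v m =>
        exact (DerivPGA.pga4 _ _).trans (.seq_congr (.refl _)
          (.rep_congr (F_append (v :: m) [u] (by simp) (by simp))))
    exact (DerivPGA.seq_congr (.refl _) key).trans ((DerivPGA.pga1 _ _ _).symm.trans
      (.seq_congr (F_append _ _ hl (by simp)) (.refl _)))

theorem rots (k : ℕ) (l m : List (PrimInstr A)) (hl : l ≠ []) (hm : m ≠ []) :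
    ∃ l' m', l'.length = l.length + k ∧ m'.length = m.length ∧
      DerivPGA ((F l).seq (F m).rep) ((F l').seq (F m').rep) := by
  induction k with
  | zero => exact ⟨l, m, rfl, rfl, .refl _⟩
  | succ k ih =>
    obtain ⟨l', m', h1, h2, h3⟩ := ih
    have a := List.length_pos_iff.2 hl
    have b := List.length_pos_iff.2 hm
    obtain ⟨l2, m2, h4, h5, h6⟩ := rot l' m' (List.length_pos_iff.1 (by omega))
      (List.length_pos_iff.1 (by omega))
    exact ⟨l2, m2, by omega, by omega, h3.trans h6⟩

theorem pow_F (m : List (PrimInstr A)) (hm : m ≠ []) (n : ℕ) :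
    DerivPGA ((F m).pow (n+1)) (F (List.replicate (n+1) m).flatten) := by
  induction n with
  | zero => simpa [PGA.pow] using DerivPGA.refl _
  | succ n ih =>
    rw [List.replicate_succ, List.flatten_cons]
    exact (DerivPGA.seq_congr (.refl _) ih).trans
      (F_append _ _ hm (by simp [List.replicate_succ, hm]))

theorem expand (m : List (PrimInstr A)) (hm : m ≠ []) (n : ℕ) (hn : 0 < n) :
    ∃ m', m'.length = n * m.length ∧ DerivPGA (F m).rep (F m').rep := by
  obtain ⟨n, rfl⟩ : ∃ k, n = k + 1 := ⟨n - 1, by omega⟩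
  exact ⟨(List.replicate (n+1) m).flatten, by simp,
    (DerivPGA.pga2 _ (n+1) (by omega)).symm.trans (.rep_congr (pow_F m hm n))⟩

theorem full (l m : List (PrimInstr A)) (hl : l ≠ []) (hm : m ≠ []) (k n : ℕ) (hn : 0 < n) :
    ∃ l' m', l'.length = l.length + k ∧ m'.length = n * m.length ∧ l' ≠ [] ∧ m' ≠ [] ∧
      DerivPGA ((F l).seq (F m).rep) ((F l').seq (F m').rep) := by
  obtain ⟨l', m', h1, h2, h3⟩ := rots k l m hl hm
  have a := List.length_pos_iff.2 hl
  have b := List.length_pos_iff.2 hm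
  obtain ⟨m2, h4, h5⟩ := expand m' (List.length_pos_iff.1 (by omega)) n hn
  refine ⟨l', m2, h1, by rw [h4, h2], List.length_pos_iff.1 (by omega),
    List.length_pos_iff.1 ?_, h3.trans (.seq_congr (.refl _) h5)⟩
  rw [h4, h2]; positivity

theorem inf_spi (l m : List (PrimInstr A)) (hl : l ≠ []) (hm : m ≠ []) :
    ((F l).seq (F m).rep).spi = .inr fun n => if h : n < l.length then l.get ⟨n, h⟩
      else m.getD ((n - l.length) % m.length) .halt := by
  simp only [PGA.spi, F_spi l hl, F_spi m hm]; rfl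

theorem inf_eq (l m l' m' : List (PrimInstr A)) (hl : l ≠ []) (hm : m ≠ [])
    (hl' : l' ≠ []) (hm' : m' ≠ []) (e1 : l.length = l'.length) (e2 : m.length = m'.length)
    (h : ((F l).seq (F m).rep).spi = ((F l').seq (F m').rep).spi) : l = l' ∧ m = m' := by
  rw [inf_spi l m hl hm, inf_spi l' m' hl' hm'] at h
  have h := Sum.inr.inj h
  constructor
  · apply List.ext_getElem e1
    intro i h1 h2
    have := congrFun h i
    simpa [h1, h2] using this
  · apply List.ext_getElem e2
    intro i h1 h2
    have := congrFun h (i + l.length)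
    have a1 : ¬ i + l.length < l.length := by omega
    have a2 : ¬ i + l.length < l'.length := by omega
    have a3 : i + l.length - l'.length = i := by omega
    simp only [dif_neg a1, dif_neg a2, a3, Nat.add_sub_cancel, Nat.mod_eq_of_lt h1,
      Nat.mod_eq_of_lt h2] at this
    simpa [h1, h2] using this

theorem complete (X Y : PGA A) (h : X.spi = Y.spi) : DerivPGA X Y := by
  rcases normal X with ⟨l, hl, hX⟩ | ⟨l, m, hl, hm, hX⟩ <;>
  rcases normal Y with ⟨l', hl', hY⟩ | ⟨l', m', hl', hm', hY⟩
  · rw [sound hX, sound hY, F_spi _ hl, F_spi _ hl'] at h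
    cases h
    exact hX.trans hY.symm
  · rw [sound hX, sound hY, F_spi _ hl, inf_spi _ _ hl' hm'] at h
    cases h
  · rw [sound hX, sound hY, F_spi _ hl', inf_spi _ _ hl hm] at h
    cases h
  · obtain ⟨p, q, p1, q1, p2, q2, d⟩ := full l m hl hm l'.length m'.length
      (List.length_pos_iff.2 hm')
    obtain ⟨p', q', p1', q1', p2', q2', d'⟩ := full l' m' hl' hm' l.length m.length
      (List.length_pos_iff.2 hm)
    have hX := hX.trans d
    have hY := hY.trans d'
    rw [sound hX, sound hY] at h
    obtain ⟨rfl, rfl⟩ := inf_eq p q p' q' p2 q2 p2' q2' (by omega)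
      (by rw [q1, q1', Nat.mul_comm]) h
    exact hX.trans hY.symm

end PGAaux

/-- Soundness and completeness of PGA1-PGA4 for single-pass congruence:
two PGA-programs denote the same SPI iff their equality is derivable in
equational logic from PGA1-PGA4. -/
theorem single_pass_congruence_axiomatized (A : Type) (X Y : PGA A) :
    X.spi = Y.spi ↔ DerivPGA X Y := by
  exact ⟨PGAaux.complete X Y, PGAaux.sound⟩
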